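/- arXiv:1403.1511 — 2 statements merged into one kernel-verified Lean document; each statement's English description precedes it below -/
import Mathlib

section
/- Let (x, y) : [0, ∞) → ℝ² be differentiable and satisfy x′ = y + x(1 − x² − y²), y′ = −x + y(1 − x² − y²) on [0, ∞), with x(0)² + y(0)² > 0. Then x(t)² + y(t)² → 1 as t → ∞; that is, every nonzero solution is attracted to the unit-circle limit cycle. -/
open Filter

/-!
The squared radius `u = x² + y²` satisfies the logistic equation `u' = 2u(1 - u)`. For a logistic
equation `u' = r u (1 - u / K)` the reciprocal `1 / u` obeys a linear equation, and solving that one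
gives `u (u₀ + (K - u₀) e⁻ʳᵗ) = K u₀`. In this division-free form the identity can be proved without
knowing that `u` never vanishes: the difference of the two sides satisfies a homogeneous linear
equation with zero initial value. Letting `t → ∞` yields `u → K`.
-/

theorem eq_zero_of_hasDerivWithinAt_smul {R E : Type*} [SeminormedRing R]
    [NormedAddCommGroup E] [NormedSpace ℝ E] [Module R E] [IsBoundedSMul R E]
    {f : ℝ → E} {c : ℝ → R} {a : ℝ} (hc : ContinuousOn c (Set.Ici a))
    (hf : ∀ t ∈ Set.Ici a, HasDerivWithinAt f (c t • f t) (Set.Ici a) t) (ha : f a = 0) :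
    ∀ t ∈ Set.Ici a, f t = 0 := by
  intro t ht
  obtain ⟨C, hC⟩ := (isCompact_Icc (a := a) (b := t)).exists_bound_of_continuousOn
    (hc.mono Set.Icc_subset_Ici_self)
  have hbound : ∀ s ∈ Set.Ico a t, ‖c s • f s‖ ≤ C * ‖f s‖ := fun s hs =>
    (norm_smul_le _ _).trans (by gcongr; exact hC s (Set.Ico_subset_Icc_self hs))
  exact eq_zero_of_abs_deriv_le_mul_abs_self_of_eq_zero_right
    (fun s hs => (hf s hs.1).continuousWithinAt.mono Set.Icc_subset_Ici_self)
    (fun s hs => (hf s hs.1).mono (Set.Ici_subset_Ici.mpr hs.1)) ha hbound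
    t (Set.right_mem_Icc.mpr ht)

section Logistic

variable {u : ℝ → ℝ} {r K : ℝ}

theorem logistic_solution_formula (hK : K ≠ 0)
    (hu : ∀ t ∈ Set.Ici 0, HasDerivWithinAt u (r * u t * (1 - u t / K)) (Set.Ici 0) t) :
    ∀ t ∈ Set.Ici 0, u t * (u 0 + (K - u 0) * Real.exp (-(r * t))) = K * u 0 := by
  set F : ℝ → ℝ := fun t => u t * (u 0 + (K - u 0) * Real.exp (-(r * t))) - K * u 0 with hF
  have hF_deriv : ∀ t ∈ Set.Ici 0,
      HasDerivWithinAt F ((-(r / K) * u t) • F t) (Set.Ici 0) t := by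
    intro t ht
    have hexp : HasDerivAt (fun s => Real.exp (-(r * s))) (Real.exp (-(r * t)) * -r) t := by
      simpa using ((hasDerivAt_id t).const_mul r).neg.exp
    refine (((hu t ht).mul ((hexp.const_mul (K - u 0)).const_add (u 0)).hasDerivWithinAt).sub_const
      (K * u 0)).congr_deriv ?_
    simp only [hF, smul_eq_mul]
    field_simp
    ring
  have hu_cont : ContinuousOn u (Set.Ici 0) := fun t ht => (hu t ht).continuousWithinAt
  have hF_zero : F 0 = 0 := by simp [hF, mul_comm]
  intro t ht
  exact sub_eq_zero.mp
    (eq_zero_of_hasDerivWithinAt_smul (hu_cont.const_mul (-(r / K))) hF_deriv hF_zero t ht)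

theorem tendsto_carryingCapacity_of_logistic (hr : 0 < r) (hK : K ≠ 0)
    (hu : ∀ t ∈ Set.Ici 0, HasDerivWithinAt u (r * u t * (1 - u t / K)) (Set.Ici 0) t)
    (hu₀ : u 0 ≠ 0) : Tendsto u atTop (nhds K) := by
  set D : ℝ → ℝ := fun t => u 0 + (K - u 0) * Real.exp (-(r * t))
  have hexp : Tendsto (fun t => Real.exp (-(r * t))) atTop (nhds 0) :=
    Real.tendsto_exp_neg_atTop_nhds_zero.comp (tendsto_id.const_mul_atTop hr)
  have hD : Tendsto D atTop (nhds (u 0)) := by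
    simpa using (hexp.const_mul (K - u 0)).const_add (u 0)
  have hquot : Tendsto (fun t => K * u 0 / D t) atTop (nhds K) := by
    simpa [hu₀, Pi.div_def] using (tendsto_const_nhds (x := K * u 0)).div hD hu₀
  refine hquot.congr' ?_
  filter_upwards [eventually_ge_atTop 0, hD.eventually_ne hu₀] with t ht hDt
  exact (eq_div_of_mul_eq hDt (logistic_solution_formula hK hu t ht)).symm

end Logistic

theorem hasDerivWithinAt_sq_add_sq_of_rotation_add_scaling {x y : ℝ → ℝ} {s : Set ℝ} {t ω c : ℝ}
    (hx : HasDerivWithinAt x (ω * y t + x t * c) s t)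
    (hy : HasDerivWithinAt y (-(ω * x t) + y t * c) s t) :
    HasDerivWithinAt (fun t => x t ^ 2 + y t ^ 2) (2 * (x t ^ 2 + y t ^ 2) * c) s t :=
  ((hx.pow 2).add (hy.pow 2)).congr_deriv (by push_cast; ring)

/-- every nonzero solution of `x′ = y + x(1 − x² − y²)`,
`y′ = −x + y(1 − x² − y²)` on `[0, ∞)` is attracted to the unit-circle limit
cycle: `x(t)² + y(t)² → 1` as `t → ∞`. -/
theorem attracted_to_unit_circle (x y : ℝ → ℝ)
    (hx : ∀ t : ℝ, 0 ≤ t →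
      HasDerivAt x (y t + x t * (1 - x t ^ 2 - y t ^ 2)) t)
    (hy : ∀ t : ℝ, 0 ≤ t →
      HasDerivAt y (-x t + y t * (1 - x t ^ 2 - y t ^ 2)) t)
    (h0 : 0 < x 0 ^ 2 + y 0 ^ 2) :
    Tendsto (fun t => x t ^ 2 + y t ^ 2) atTop (nhds 1) := by
  have hlogistic : ∀ t ∈ Set.Ici (0 : ℝ), HasDerivWithinAt (fun t => x t ^ 2 + y t ^ 2)
      (2 * (x t ^ 2 + y t ^ 2) * (1 - (x t ^ 2 + y t ^ 2) / 1)) (Set.Ici 0) t := by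
    intro t ht
    have hradial := hasDerivWithinAt_sq_add_sq_of_rotation_add_scaling (s := Set.Ici 0)
      (ω := 1) (by simpa using (hx t ht).hasDerivWithinAt)
      (by simpa using (hy t ht).hasDerivWithinAt)
    simpa [sub_sub] using hradial
  exact tendsto_carryingCapacity_of_logistic two_pos one_ne_zero hlogistic h0.ne'
end

section
/- Let u : [0, ∞) → ℝ be differentiable with u′(t) = 2·u(t)·(1 − u(t)) for all t ≥ 0 and u(0) > 0. Then u(t) > 0 for all t ≥ 0 and u(t) → 1 as t → ∞. -/
open Filter

/-!
Written as `u′ = a u` with `a = r (1 - u / K)`, the logistic equation is linear in `u`, so `u` is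
`u 0` times an exponential and keeps its sign. Bernoulli's substitution `w = 1 / u` is then
available and gives `(w - 1 / K)′ = -r (w - 1 / K)`; hence `w` tends to `1 / K` exponentially fast,
and `u` tends to `K`.
-/

open Set Topology

section LinearODE

variable {E : Type*} [NormedAddCommGroup E] [NormedSpace ℝ E] {a b : ℝ}

lemma hasDerivWithinAt_integral_Icc [CompleteSpace E] {f : ℝ → E} (hf : ContinuousOn f (Icc a b))
    {t : ℝ} (ht : t ∈ Icc a b) :
    HasDerivWithinAt (fun s ↦ ∫ x in a..s, f x) (f t) (Icc a b) t := by
  have : Fact (t ∈ Icc a b) := ⟨ht⟩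
  have hint : IntervalIntegrable f MeasureTheory.volume a t :=
    (hf.mono (Icc_subset_Icc_right ht.2)).intervalIntegrable_of_Icc ht.1
  exact intervalIntegral.integral_hasDerivWithinAt_right hint
    (hf.stronglyMeasurableAtFilter_nhdsWithin measurableSet_Icc t) (hf t ht)

lemma eq_exp_integral_smul_of_hasDerivWithinAt {c : ℝ → ℝ} {y : ℝ → E} (hab : a ≤ b)
    (hc : ContinuousOn c (Icc a b))
    (hy : ∀ t ∈ Icc a b, HasDerivWithinAt y (c t • y t) (Icc a b) t) :
    y b = Real.exp (∫ s in a..b, c s) • y a := by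
  let g : ℝ → E := fun t ↦ Real.exp (-∫ s in a..t, c s) • y t
  have hg : ∀ t ∈ Icc a b, HasDerivWithinAt g 0 (Icc a b) t := fun t ht ↦ by
    refine ((hasDerivWithinAt_integral_Icc hc ht).fun_neg.exp.fun_smul (hy t ht)).congr_deriv ?_
    module
  have hconst : g b = g a := constant_of_has_deriv_right_zero
    (fun t ht ↦ (hg t ht).continuousWithinAt)
    (fun t ht ↦ (hg t (Ico_subset_Icc_self ht)).mono_of_mem_nhdsWithin (Icc_mem_nhdsGE_of_mem ht))
    b (right_mem_Icc.mpr hab)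
  have hcancel : Real.exp (-∫ s in a..b, c s) • y b = y a := by simpa [g] using hconst
  rw [← hcancel, smul_smul, ← Real.exp_add, add_neg_cancel, Real.exp_zero, one_smul]

end LinearODE

section Logistic

variable {r K : ℝ} {u : ℝ → ℝ}

lemma logistic_pos
    (hu : ∀ t : ℝ, 0 ≤ t → HasDerivWithinAt u (r * u t * (1 - u t / K)) (Ici 0) t)
    (h0 : 0 < u 0) {t : ℝ} (ht : 0 ≤ t) : 0 < u t := by
  have hcont : ContinuousOn u (Icc 0 t) := fun s hs ↦
    (hu s hs.1).continuousWithinAt.mono Icc_subset_Ici_self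
  have hlin : ∀ s ∈ Icc 0 t, HasDerivWithinAt u ((r * (1 - u s / K)) • u s) (Icc 0 t) s :=
    fun s hs ↦ ((hu s hs.1).mono Icc_subset_Ici_self).congr_deriv (by rw [smul_eq_mul]; ring)
  rw [eq_exp_integral_smul_of_hasDerivWithinAt ht (by fun_prop) hlin]
  exact smul_pos (Real.exp_pos _) h0

lemma logistic_inv_sub_inv
    (hu : ∀ t : ℝ, 0 ≤ t → HasDerivWithinAt u (r * u t * (1 - u t / K)) (Ici 0) t)
    (h0 : 0 < u 0) {t : ℝ} (ht : 0 ≤ t) :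
    (u t)⁻¹ - K⁻¹ = Real.exp (-r * t) * ((u 0)⁻¹ - K⁻¹) := by
  have hderiv : ∀ s ∈ Icc 0 t, HasDerivWithinAt (fun s ↦ (u s)⁻¹ - K⁻¹)
      (-r • ((u s)⁻¹ - K⁻¹)) (Icc 0 t) s := fun s hs ↦ by
    have hne : u s ≠ 0 := (logistic_pos hu h0 hs.1).ne'
    refine ((((hu s hs.1).mono Icc_subset_Ici_self).fun_inv hne).sub_const K⁻¹).congr_deriv ?_
    rw [smul_eq_mul, div_eq_mul_inv (u s) K]
    field_simp
  simpa [mul_comm t r] using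
    eq_exp_integral_smul_of_hasDerivWithinAt (c := fun _ ↦ -r) ht continuousOn_const hderiv

theorem logistic_tendsto_one_general (hr : 0 < r) (hK : 0 < K)
    (hu : ∀ t : ℝ, 0 ≤ t → HasDerivWithinAt u (r * u t * (1 - u t / K)) (Ici 0) t)
    (h0 : 0 < u 0) :
    (∀ t : ℝ, 0 ≤ t → 0 < u t) ∧ Tendsto u atTop (𝓝 K) := by
  refine ⟨fun t ht ↦ logistic_pos hu h0 ht, ?_⟩
  have hexp : Tendsto (fun t ↦ Real.exp (-r * t)) atTop (𝓝 0) :=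
    Real.tendsto_exp_atBot.comp (tendsto_id.const_mul_atTop_of_neg (neg_lt_zero.mpr hr))
  have hdiff : Tendsto (fun t ↦ (u t)⁻¹ - K⁻¹) atTop (𝓝 0) := by
    refine Tendsto.congr' ?_ (zero_mul ((u 0)⁻¹ - K⁻¹) ▸ hexp.mul_const _)
    filter_upwards [eventually_ge_atTop 0] with t ht using (logistic_inv_sub_inv hu h0 ht).symm
  have hinv : Tendsto (fun t ↦ (u t)⁻¹) atTop (𝓝 K⁻¹) := tendsto_sub_nhds_zero_iff.mp hdiff
  exact (tendsto_inv_iff₀ hK.ne').mp hinv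

end Logistic

/-- any solution of the logistic equation `u′ = 2u(1 − u)` on
`[0, ∞)` with `u(0) > 0` stays positive and tends to `1`. -/
theorem logistic_tendsto_one (u : ℝ → ℝ)
    (hu : ∀ t : ℝ, 0 ≤ t → HasDerivAt u (2 * u t * (1 - u t)) t)
    (h0 : 0 < u 0) :
    (∀ t : ℝ, 0 ≤ t → 0 < u t) ∧ Tendsto u atTop (nhds 1) :=
  logistic_tendsto_one_general two_pos one_pos
    (fun t ht ↦ by simpa only [div_one] using (hu t ht).hasDerivWithinAt) h0
end
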